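/- arXiv:2103.11244 — 2 statements merged into one kernel-verified Lean document; each statement's English description precedes it below -/
import Mathlib

section
/- Let M be a finite nonempty set, k ≥ 1, and ε a real number with 0 < ε ≤ 1. Let X := M^{≤k} be the set of tuples over M of length between 1 and k, and let V := EuclideanSpace ℂ over the index type of all functions H : X → Bool, with standard orthonormal basis vectors e_H. For m = (m_1, ..., m_k) ∈ M^k, let S_m be the set of all H : X → Bool with H(m_1, ..., m_i) = true for every i ∈ {1,...,k}. Then there exists a unitary U_m on V such that U_m ( Σ_{H : X → Bool} √(D_ε(H)) · e_H ) = Σ_{H ∈ S_m} √( D_ε(H) / ε^k ) · e_H. (This is Lemma 3.5 of the paper, the existence of the adjusting unitary used by the superposition-aborting verifier.) -/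
/-!
Statement 8 (Lemma 3.5): existence of the adjusting unitary used by the
superposition-aborting verifier.
-/

open scoped BigOperators
open Classical

noncomputable section

/-- `Tup M k`: the set `M^{≤k}` of tuples over `M` of length between 1 and `k`;
`⟨i, f⟩` encodes the tuple `(f 0, …, f i)` of length `i + 1`. -/
def Tup (M : Type) (k : ℕ) : Type := Σ i : Fin k, (Fin (i.1 + 1) → M)

instance (M : Type) (k : ℕ) [Fintype M] : Fintype (Tup M k) := by
  unfold Tup; infer_instance

instance (M : Type) (k : ℕ) [DecidableEq M] : DecidableEq (Tup M k) := by
  unfold Tup; infer_instance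

/-- The prefix `(m_1, …, m_{i+1})` (of length `i+1`) of a full tuple `m ∈ M^k`. -/
def pre {M : Type} {k : ℕ} (m : Fin k → M) (i : Fin k) : Tup M k :=
  ⟨i, fun t => m ⟨t.1, by have := t.isLt; have := i.isLt; omega⟩⟩

/-- The Bernoulli(ε) product weight of a Boolean function `H`:
`D_ε(H) := ∏_u (ε if H u = true, 1 − ε otherwise)`. -/
def bernoulliWeight {X : Type} [Fintype X] (ε : ℝ) (H : X → Bool) : ℝ :=
  ∏ u : X, if H u then ε else 1 - ε

/-- Two unit vectors are related by a unitary. -/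
lemma exists_unitary_of_unit {ι : Type} [Fintype ι] (i0 : ι)
    (v w : EuclideanSpace ℂ ι) (hv : ‖v‖ = 1) (hw : ‖w‖ = 1) :
    ∃ U : EuclideanSpace ℂ ι ≃ₗᵢ[ℂ] EuclideanSpace ℂ ι, U v = w := by
  have key : ∀ x : EuclideanSpace ℂ ι, ‖x‖ = 1 →
      ∃ b : OrthonormalBasis ι ℂ (EuclideanSpace ℂ ι), b i0 = x := by
    intro x hx
    have ho : Orthonormal ℂ (({i0} : Set ι).domRestrict (fun _ : ι => x)) := by
      constructor
      · intro i
        exact hx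
      · intro i j hij
        exact absurd (Subsingleton.elim i j) hij
    obtain ⟨b, hb⟩ := ho.exists_orthonormalBasis_extension_of_card_eq (by simp)
    exact ⟨b, hb i0 rfl⟩
  obtain ⟨b, hb⟩ := key v hv
  obtain ⟨c, hc⟩ := key w hw
  refine ⟨b.equiv c (Equiv.refl ι), ?_⟩
  rw [← hb, ← hc, OrthonormalBasis.equiv_apply_basis]
  rfl

lemma sum_coord {ι : Type} [Fintype ι] [DecidableEq ι] (c : ι → ℂ) (h : ∑ i, ‖c i‖ ^ 2 = 1) :
    ‖∑ i, c i • (EuclideanSpace.single i 1 : EuclideanSpace ℂ ι)‖ = 1 := by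
  have : ∑ i, c i • (EuclideanSpace.single i 1 : EuclideanSpace ℂ ι) = WithLp.toLp 2 c := by
    ext j
    simp [Finset.sum_apply, Pi.single_apply]
  rw [this, EuclideanSpace.norm_eq]
  simp [h]

lemma sum_fun_prod {X : Type} [Fintype X] [DecidableEq X] (g : X → Bool → ℝ) :
    ∑ H : X → Bool, ∏ u, g u (H u) = ∏ u, (g u true + g u false) := by
  have := Finset.prod_univ_sum (fun _ : X => (Finset.univ : Finset Bool)) g
  rw [Fintype.piFinset_univ] at this
  rw [← this]
  simp

lemma bernoulliWeight_sum {X : Type} [Fintype X] [DecidableEq X] (ε : ℝ) :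
    ∑ H : X → Bool, bernoulliWeight ε H = 1 := by
  unfold bernoulliWeight
  rw [sum_fun_prod (fun _ b => if b then ε else 1 - ε)]
  simp

lemma bernoulliWeight_sum_cond {X : Type} [Fintype X] [DecidableEq X] (ε : ℝ) (k : ℕ)
    (p : Fin k → X) (hp : Function.Injective p) :
    ∑ H : X → Bool, (if ∀ i, H (p i) = true then bernoulliWeight ε H else 0) = ε ^ k := by
  have h1 : ∀ H : X → Bool, (if ∀ i, H (p i) = true then bernoulliWeight ε H else 0) =
      ∏ u, (fun u b => if b then ε else if u ∈ Finset.univ.image p then 0 else 1 - ε) u (H u) := by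
    intro H
    split_ifs with h
    · unfold bernoulliWeight
      refine Finset.prod_congr rfl fun u _ => ?_
      by_cases hu : H u = true
      · simp [hu]
      · have : u ∉ Finset.univ.image p := by
          intro hm
          obtain ⟨i, _, rfl⟩ := Finset.mem_image.1 hm
          exact hu (h i)
        simp only [hu, this, if_false]
    · push Not at h
      obtain ⟨i, hi⟩ := h
      symm
      apply Finset.prod_eq_zero (Finset.mem_univ (p i))
      simp [hi]
  rw [Finset.sum_congr rfl fun H _ => h1 H,
    sum_fun_prod (fun u b => if b then ε else if u ∈ Finset.univ.image p then 0 else 1 - ε)]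
  have h2 : ∀ u : X, ((if true = true then ε else if u ∈ Finset.univ.image p then 0 else 1 - ε) +
      (if false = true then ε else if u ∈ Finset.univ.image p then 0 else 1 - ε)) =
      if u ∈ Finset.univ.image p then ε else 1 := by
    intro u
    by_cases hu : u ∈ Finset.univ.image p
    · simp only [hu, if_true]; simp
    · simp only [hu, if_false]; simp
  rw [Finset.prod_congr rfl fun u _ => h2 u, Finset.prod_ite_mem, Finset.univ_inter,
    Finset.prod_const, Finset.card_image_of_injective _ hp]
  simp

lemma pre_injective {M : Type} {k : ℕ} (m : Fin k → M) : Function.Injective (pre m) := by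
  intro i j h
  exact congrArg Sigma.fst h

lemma bernoulliWeight_nonneg {X : Type} [Fintype X] (ε : ℝ) (h0 : 0 < ε) (h1 : ε ≤ 1)
    (H : X → Bool) : 0 ≤ bernoulliWeight ε H := by
  refine Finset.prod_nonneg fun u _ => ?_
  split_ifs <;> linarith

/-- **Existence of the adjusting unitary (Lemma 3.5).**
For `0 < ε ≤ 1` and a full tuple `m ∈ M^k`, there is a unitary `U_m` on the Hilbert space
spanned by the basis `{e_H : H : M^{≤k} → Bool}` mapping the "square-root Bernoulli(ε)"
superposition `∑_H √(D_ε H) e_H` to the renormalized superposition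
`∑_{H ∈ S_m} √(D_ε H / ε^k) e_H` over the set `S_m` of functions `H` that evaluate to
`true` on every prefix of `m`. -/
theorem adjusting_unitary_exists
    (M : Type) [Fintype M] [DecidableEq M] [Nonempty M]
    (k : ℕ) (hk : 1 ≤ k)
    (ε : ℝ) (hε0 : 0 < ε) (hε1 : ε ≤ 1)
    (m : Fin k → M) :
    ∃ Um : EuclideanSpace ℂ (Tup M k → Bool) ≃ₗᵢ[ℂ] EuclideanSpace ℂ (Tup M k → Bool),
      Um (∑ H : Tup M k → Bool,
            (Real.sqrt (bernoulliWeight ε H) : ℂ) • EuclideanSpace.single H 1)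
        = ∑ H : Tup M k → Bool,
            if ∀ i : Fin k, H (pre m i) = true
            then (Real.sqrt (bernoulliWeight ε H / ε ^ k) : ℂ) • EuclideanSpace.single H 1
            else 0 := by
  apply exists_unitary_of_unit (fun _ => true)
  · apply sum_coord
    rw [← bernoulliWeight_sum (X := Tup M k) ε]
    refine Finset.sum_congr rfl fun H _ => ?_
    rw [Complex.norm_real, Real.norm_eq_abs, sq_abs,
      Real.sq_sqrt (bernoulliWeight_nonneg ε hε0 hε1 H)]
  · have hs : ∀ H : Tup M k → Bool, (if ∀ i : Fin k, H (pre m i) = true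
            then (Real.sqrt (bernoulliWeight ε H / ε ^ k) : ℂ) •
              (EuclideanSpace.single H 1 : EuclideanSpace ℂ (Tup M k → Bool))
            else 0) = (if ∀ i : Fin k, H (pre m i) = true
            then (Real.sqrt (bernoulliWeight ε H / ε ^ k) : ℂ) else 0) •
              (EuclideanSpace.single H 1 : EuclideanSpace ℂ (Tup M k → Bool)) := by
      intro H
      split_ifs <;> simp
    rw [Finset.sum_congr rfl fun H _ => hs H]
    apply sum_coord
    have hpos : (0 : ℝ) < ε ^ k := pow_pos hε0 k
    have hsum := bernoulliWeight_sum_cond ε k (pre m) (pre_injective m)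
    rw [← div_self hpos.ne']
    nth_rewrite 2 [← hsum]
    rw [Finset.sum_div]
    refine Finset.sum_congr rfl fun H _ => ?_
    by_cases h : ∀ i : Fin k, H (pre m i) = true
    · rw [if_pos h, if_pos h, Complex.norm_real, Real.norm_eq_abs, sq_abs,
        Real.sq_sqrt (div_nonneg (bernoulliWeight_nonneg ε hε0 hε1 H) hpos.le)]
    · rw [if_neg h, if_neg h]
      simp
end
end

section
/- Let A and B be natural numbers with 1 ≤ B ≤ A, let M be a finite nonempty set, k ≥ 1, let K' be a finite nonempty set, and let H' : K' → (M^{≤k} → ZMod A) be an arbitrary family of functions. Set K := K' × (Fin k → ZMod A), and for κ = (κ', a) ∈ K define H̃_κ : M^{≤k} → Bool by: H̃_κ(m_1, ..., m_i) = true if and only if ((H'_{κ'}(m_1, ..., m_i)) + a_i).val < B, where .val ∈ {0, ..., A−1} is the canonical representative. For m = (m_1, ..., m_k) ∈ M^k, let S_m := { κ ∈ K : H̃_κ(m_1, ..., m_i) = true for every i ∈ {1,...,k} }. Then the cardinality of S_m equals |K'| · B^k; in particular S_m is nonempty, and there exists a unitary U on EuclideanSpace ℂ K such that U ( Σ_{κ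 ∈ K} |K|^{−1/2} e_κ ) = Σ_{κ ∈ S_m} |S_m|^{−1/2} e_κ. (This is the second item of Lemma 3.12 of the paper, the efficiently implementable adjusting unitary for the shifted hash family.) -/
/-!
Statement 10 (second item of Lemma 3.12): the efficiently implementable adjusting
unitary for the shifted hash family.
-/

open scoped BigOperators
open Classical

noncomputable section

/-- The shifted hash family: for a key `κ = (κ', a)`, the Boolean function
`H̃_κ(u) = true` iff `(H'_{κ'}(u) + a_{len u}).val < B`, where the length of the tuple
`u` selects the coordinate of the shift vector `a`. -/
def shiftedHash {M K' : Type} {k A : ℕ} [NeZero A] (B : ℕ)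
    (H' : K' → Tup M k → ZMod A) (κ : K' × (Fin k → ZMod A)) (u : Tup M k) : Bool :=
  decide ((H' κ.1 u + κ.2 u.1).val < B)

/-- The set `S_m ⊆ K = K' × (ZMod A)^k` of keys whose shifted hash marks every prefix
of the full tuple `m ∈ M^k`. -/
def Sm {M K' : Type} {k A : ℕ} [NeZero A] [Fintype M] [DecidableEq M] [Fintype K']
    (B : ℕ) (H' : K' → Tup M k → ZMod A) (m : Fin k → M) :
    Finset (K' × (Fin k → ZMod A)) :=
  Finset.univ.filter fun κ => ∀ i : Fin k, shiftedHash B H' κ (pre m i) = true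

theorem sha_exists_unitary {ι : Type} [Fintype ι] [Nonempty ι] (x y : EuclideanSpace ℂ ι)
    (hx : ‖x‖ = 1) (hy : ‖y‖ = 1) :
    ∃ U : EuclideanSpace ℂ ι ≃ₗᵢ[ℂ] EuclideanSpace ℂ ι, U x = y := by
  obtain ⟨i0⟩ := ‹Nonempty ι›
  have key : ∀ z : EuclideanSpace ℂ ι, ‖z‖ = 1 →
      ∃ b : OrthonormalBasis ι ℂ (EuclideanSpace ℂ ι), b i0 = z := by
    intro z hz
    have ho : Orthonormal ℂ (({i0} : Set ι).domRestrict (fun _ : ι => z)) := by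
      constructor
      · intro i
        exact hz
      · intro i j hij
        exact absurd (Subsingleton.elim i j) hij
    obtain ⟨b, hb⟩ := ho.exists_orthonormalBasis_extension_of_card_eq
      (by simp)
    exact ⟨b, hb i0 rfl⟩
  obtain ⟨b, hb⟩ := key x hx
  obtain ⟨c, hc⟩ := key y hy
  refine ⟨b.equiv c (Equiv.refl ι), ?_⟩
  rw [← hb, ← hc]
  simp

theorem sha_norm_uniform {ι : Type} [Fintype ι] [DecidableEq ι] (S : Finset ι)
    (hS : S.Nonempty) :
    ‖∑ i ∈ S, ((Real.sqrt (S.card))⁻¹ : ℂ) •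
      (EuclideanSpace.single i 1 : EuclideanSpace ℂ ι)‖ = 1 := by
  have hpos : (0 : ℝ) < S.card := by exact_mod_cast hS.card_pos
  have h : ∀ j, (∑ i ∈ S, ((Real.sqrt (S.card))⁻¹ : ℂ) •
      (EuclideanSpace.single i 1 : EuclideanSpace ℂ ι)) j =
      if j ∈ S then ((Real.sqrt (S.card))⁻¹ : ℂ) else 0 := by
    intro j
    simp [Pi.single_apply]
  rw [EuclideanSpace.norm_eq]
  simp only [h]
  have h2 : ∀ j, ‖(if j ∈ S then ((Real.sqrt (S.card))⁻¹ : ℂ) else 0)‖ ^ 2 =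
      if j ∈ S then (S.card : ℝ)⁻¹ else 0 := by
    intro j
    split_ifs
    · rw [norm_inv, Complex.norm_real, Real.norm_eq_abs, inv_pow, sq_abs,
        Real.sq_sqrt hpos.le]
    · simp
  simp only [h2]
  rw [Finset.sum_ite_mem, Finset.univ_inter, Finset.sum_const, nsmul_eq_mul,
    mul_inv_cancel₀ hpos.ne', Real.sqrt_one]

theorem sha_card_val_lt (A B : ℕ) [NeZero A] (hBA : B ≤ A) :
    (Finset.univ.filter fun z : ZMod A => z.val < B).card = B := by
  conv_rhs => rw [← Finset.card_range B]
  refine Finset.card_nbij' (fun z => z.val) (fun n => (n : ZMod A)) ?_ ?_ ?_ ?_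
  · intro z hz
    simpa using hz
  · intro n hn
    have hn' : n < B := by simpa using hn
    simpa [ZMod.val_natCast_of_lt (lt_of_lt_of_le hn' hBA)] using hn'
  · intro z _
    simp
  · intro n hn
    have hn' : n < B := by simpa using hn
    exact ZMod.val_natCast_of_lt (lt_of_lt_of_le hn' hBA)

theorem sha_card {M K' : Type} {k A : ℕ} [NeZero A] [Fintype M] [DecidableEq M] [Fintype K']
    (B : ℕ) (hBA : B ≤ A) (H' : K' → Tup M k → ZMod A) (m : Fin k → M) :
    (Sm B H' m).card = Fintype.card K' * B ^ k := by
  have hT : ((Finset.univ : Finset K') ×ˢ Fintype.piFinset (fun _ : Fin k =>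
      Finset.univ.filter fun z : ZMod A => z.val < B)).card = Fintype.card K' * B ^ k := by
    rw [Finset.card_product, Fintype.card_piFinset]
    simp only [sha_card_val_lt A B hBA]
    simp
  have hmem : ∀ κ, κ ∈ Sm B H' m ↔ ∀ i, (H' κ.1 (pre m i) + κ.2 i).val < B := by
    intro κ
    unfold Sm
    rw [Finset.mem_filter]
    simp only [Finset.mem_univ, true_and]
    exact forall_congr' fun i => decide_eq_true_iff
  rw [← hT]
  refine Finset.card_nbij' (fun κ => (κ.1, fun i => H' κ.1 (pre m i) + κ.2 i))
    (fun κ => (κ.1, fun i => κ.2 i - H' κ.1 (pre m i))) ?_ ?_ ?_ ?_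
  · intro κ hκ
    have h := (hmem κ).1 hκ
    simpa using h
  · intro κ hκ
    refine (hmem _).2 ?_
    simpa using hκ
  · intro κ _
    simp
  · intro κ _
    simp

/-- **Adjusting unitary for the shifted hash family (Lemma 3.12, second item).**
With `1 ≤ B ≤ A` and an arbitrary base family `H' : K' → (M^{≤k} → ZMod A)`, the set
`S_m` of keys marking all prefixes of `m` has exactly `|K'| · B^k` elements; in
particular it is nonempty, and there is a unitary mapping the uniform superposition
over `K := K' × (ZMod A)^k` to the uniform superposition over `S_m`. -/
theorem shifted_hash_adjusting_unitary
    (A B : ℕ) (hB : 1 ≤ B) (hBA : B ≤ A) [NeZero A]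
    (M : Type) [Fintype M] [DecidableEq M] [Nonempty M]
    (k : ℕ) (hk : 1 ≤ k)
    (K' : Type) [Fintype K'] [DecidableEq K'] [Nonempty K']
    (H' : K' → Tup M k → ZMod A)
    (m : Fin k → M) :
    (Sm B H' m).card = Fintype.card K' * B ^ k
    ∧ (Sm B H' m).Nonempty
    ∧ ∃ Um : EuclideanSpace ℂ (K' × (Fin k → ZMod A)) ≃ₗᵢ[ℂ]
              EuclideanSpace ℂ (K' × (Fin k → ZMod A)),
        Um (∑ κ : K' × (Fin k → ZMod A),
              ((Real.sqrt (Fintype.card (K' × (Fin k → ZMod A))))⁻¹ : ℂ) •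
                EuclideanSpace.single κ 1)
          = ∑ κ ∈ Sm B H' m,
              ((Real.sqrt ((Sm B H' m).card))⁻¹ : ℂ) • EuclideanSpace.single κ 1 := by
  have hc := sha_card B hBA H' m
  have hne : (Sm B H' m).Nonempty := by
    rw [← Finset.card_pos, hc]
    exact Nat.mul_pos Fintype.card_pos (pow_pos hB k)
  refine ⟨hc, hne, ?_⟩
  apply sha_exists_unitary
  · have := sha_norm_uniform (Finset.univ : Finset (K' × (Fin k → ZMod A)))
      Finset.univ_nonempty
    rw [Finset.card_univ] at this
    convert this
  · convert sha_norm_uniform (Sm B H' m) hne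
end
end
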